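/- With θ = 0.8234, for every n ≥ 1, every w ∈ W, and every y ∈ W one has |Q^n(w,[0,y)) − Q∞([0,y))| ≤ θ^n, where Q^n is the n-step transition probability function. -/

import Mathlib

open Real MeasureTheory Filter Set
open scoped ENNReal NNReal Classical

namespace OCF

/-- The golden ratio `G = (1+√5)/2`. -/
noncomputable def G : ℝ := (1 + Real.sqrt 5) / 2

/-- `g = (√5-1)/2`. -/
noncomputable def gg : ℝ := (Real.sqrt 5 - 1) / 2

/-- The map `u : W × X → W` of the RSCC; `uF w e i = u(w,(e,i))`. -/
noncomputable def uF (w : ℝ) (e i : ℤ) : ℝ :=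
  if e = 1 then 1 / (i + w)
  else if w < gg ^ 2 then 1 / (i - w) else 1 / (i - gg ^ 2)

/-- The probabilities `P : W × X → [0,∞)` of the RSCC; `PF w e i = P(w,(e,i))`. -/
noncomputable def PF (w : ℝ) (e i : ℤ) : ℝ :=
  if w < gg ^ 2 then
    (1 - w ^ 2) * (2 - (if i = 1 then 1 else 0)) /
      (2 * ((i : ℝ) - 1 + (if i = 1 then 1 else 0) + (e : ℝ) * w) * ((i : ℝ) + 1 + (e : ℝ) * w))
  else
    (1 + w) * (2 - (if i = 1 then 1 else 0)) * (if e = 1 then 1 else 0) /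
      (((i : ℝ) - 1 + (if i = 1 then 1 else 0) + w) * ((i : ℝ) + 1 + w))

/-- The transition probability function
`Q(w,B) = Σ_{(e,i) ∈ X : u(w,(e,i)) ∈ B} P(w,(e,i))`, where odd `i` is written as `2m+1`. -/
noncomputable def Qf (w : ℝ) (B : Set ℝ) : ℝ :=
  ∑' m : ℕ, ((if uF w 1 (2 * (m : ℤ) + 1) ∈ B then PF w 1 (2 * (m : ℤ) + 1) else 0)
           + (if uF w (-1) (2 * (m : ℤ) + 1) ∈ B then PF w (-1) (2 * (m : ℤ) + 1) else 0))

/-- The stationary probability measure `Q∞` on `W = [0,G]`. -/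
noncomputable def Qinf : Measure ℝ :=
  (volume.restrict (Set.Icc (0 : ℝ) G)).withDensity
    (fun w => ENNReal.ofReal ((3 * Real.log G)⁻¹ *
      (if w < gg ^ 2 then 1 / (1 + w) + 1 / (1 - w) else 1 / (1 + w))))

/-- The transition operator `U` of the Markov chain: `Uf(w) = Σ_{(e,i)} P(w,(e,i)) f(u(w,(e,i)))`. -/
noncomputable def U (f : ℝ → ℂ) : ℝ → ℂ := fun w =>
  ∑' m : ℕ, ((PF w 1 (2 * (m : ℤ) + 1) : ℂ) * f (uF w 1 (2 * (m : ℤ) + 1))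
           + (PF w (-1) (2 * (m : ℤ) + 1) : ℂ) * f (uF w (-1) (2 * (m : ℤ) + 1)))

/-- The `n`-step transition probability, as a measure-valued kernel: `Qiter 1 w = Q(w,·)` and
`Qiter (n+1) w B = ∫_W Qiter n w' B Q(w,dw')` (the transition measure `Q(w,·)` being purely
atomic with atom `u(w,(e,i))` of mass `P(w,(e,i))`). -/
noncomputable def Qiter : ℕ → ℝ → Measure ℝ
  | 0 => fun w => Measure.dirac w
  | n + 1 => fun w => Measure.sum (fun m : ℕ =>
      ENNReal.ofReal (PF w 1 (2 * (m : ℤ) + 1)) • Qiter n (uF w 1 (2 * (m : ℤ) + 1)) +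
      ENNReal.ofReal (PF w (-1) (2 * (m : ℤ) + 1)) • Qiter n (uF w (-1) (2 * (m : ℤ) + 1)))

end OCF

open OCF

/-!
Write `q = g²`. One step of the chain replaces the discrepancy `Qⁿ(w, B) - Q∞(B)` by the difference
of the expectations of `x ↦ Q(x, B)` under `Qⁿ(w, ·)` and `Q∞`, because `Q∞` is stationary. For
a lower set `B` the function `x ↦ Q(x, B)` is explicit: some digits contribute fully, one of them
partially, and the mass of the contributing tail of digits telescopes. By the layer cake formula, a
Kolmogorov distance `b` between two measures changes the expectation of a monotone function by at
most its variation times `b`.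

The total variation of `x ↦ Q(x, B)` can exceed `0.8234`, but part of it is the jump at `q`, which
is paid for by the discrepancy `a` of the mass of `[0, q)` alone. The pair of bounds
`b = 0.8234ⁿ`, `a = (2/3) b` reproduces itself: `[0, q)` consists exactly of the digits `i ≥ 3`, so
its own discrepancy after one step is at most `b / 2`, less than `(2/3) · 0.8234 · b`.
-/

namespace OCF

section IntegralGap

variable {α : Type*} [MeasurableSpace α] {μ ν : Measure α}

/-- The expectations of `f` under `μ` and under `ν` both exist and differ by at most `C`. -/
structure IntegralGapLE (μ ν : Measure α) (f : α → ℝ) (C : ℝ) : Prop where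
  integrable_left : Integrable f μ
  integrable_right : Integrable f ν
  abs_sub_le : |∫ x, f x ∂μ - ∫ x, f x ∂ν| ≤ C

namespace IntegralGapLE

variable {f g : α → ℝ} {C D : ℝ}

lemma mono (hf : IntegralGapLE μ ν f C) (h : C ≤ D) : IntegralGapLE μ ν f D :=
  ⟨hf.integrable_left, hf.integrable_right, hf.abs_sub_le.trans h⟩

lemma congr (hf : IntegralGapLE μ ν f C) (hμ : f =ᵐ[μ] g) (hν : f =ᵐ[ν] g) :
    IntegralGapLE μ ν g C where
  integrable_left := hf.integrable_left.congr hμ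
  integrable_right := hf.integrable_right.congr hν
  abs_sub_le := by simpa only [← integral_congr_ae hμ, ← integral_congr_ae hν] using hf.abs_sub_le

lemma add (hf : IntegralGapLE μ ν f C) (hg : IntegralGapLE μ ν g D) :
    IntegralGapLE μ ν (fun x => f x + g x) (C + D) where
  integrable_left := hf.integrable_left.add hg.integrable_left
  integrable_right := hf.integrable_right.add hg.integrable_right
  abs_sub_le := by
    rw [integral_add hf.integrable_left hg.integrable_left,
      integral_add hf.integrable_right hg.integrable_right, add_sub_add_comm]
    exact (abs_add_le _ _).trans (add_le_add hf.abs_sub_le hg.abs_sub_le)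

lemma const_mul (hf : IntegralGapLE μ ν f C) (r : ℝ) :
    IntegralGapLE μ ν (fun x => r * f x) (|r| * C) where
  integrable_left := hf.integrable_left.const_mul r
  integrable_right := hf.integrable_right.const_mul r
  abs_sub_le := by
    rw [integral_const_mul, integral_const_mul, ← mul_sub, abs_mul]
    exact mul_le_mul_of_nonneg_left hf.abs_sub_le (abs_nonneg r)

lemma neg (hf : IntegralGapLE μ ν f C) : IntegralGapLE μ ν (fun x => -f x) C := by
  simpa using hf.const_mul (-1)

lemma const [IsProbabilityMeasure μ] [IsProbabilityMeasure ν] (r : ℝ) :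
    IntegralGapLE μ ν (fun _ => r) 0 :=
  ⟨integrable_const r, integrable_const r, by simp⟩

lemma indicator_one [IsFiniteMeasure μ] [IsFiniteMeasure ν] {s : Set α} (hs : MeasurableSet s)
    (h : |μ.real s - ν.real s| ≤ C) : IntegralGapLE μ ν (s.indicator 1) C where
  integrable_left := (integrable_const 1).indicator hs
  integrable_right := (integrable_const 1).indicator hs
  abs_sub_le := by simpa only [integral_indicator_one hs] using h

lemma abs_toReal_lintegral_sub_le {φ : α → ℝ≥0∞} (hf : IntegralGapLE μ ν f C)
    (hμ₀ : 0 ≤ᵐ[μ] f) (hν₀ : 0 ≤ᵐ[ν] f) (hμ : φ =ᵐ[μ] fun x => ENNReal.ofReal (f x))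
    (hν : φ =ᵐ[ν] fun x => ENNReal.ofReal (f x)) :
    |(∫⁻ x, φ x ∂μ).toReal - (∫⁻ x, φ x ∂ν).toReal| ≤ C := by
  rw [lintegral_congr_ae hμ, lintegral_congr_ae hν,
    ← integral_eq_lintegral_of_nonneg_ae hμ₀ hf.integrable_left.aestronglyMeasurable,
    ← integral_eq_lintegral_of_nonneg_ae hν₀ hf.integrable_right.aestronglyMeasurable]
  exact hf.abs_sub_le

end IntegralGapLE

/-- `F`, measured from the base level `v` and restricted to `s`, has expectations under `μ` and `ν`
that differ by at most `C`. -/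
def GapOnLE (μ ν : Measure α) (s : Set α) (F : α → ℝ) (v C : ℝ) : Prop :=
  IntegralGapLE μ ν (s.indicator fun x => F x - v) C

namespace GapOnLE

variable {s : Set α} {F F' : α → ℝ} {v v' C C' : ℝ}

lemma add (hF : GapOnLE μ ν s F v C) (hF' : GapOnLE μ ν s F' v' C') :
    GapOnLE μ ν s (fun x => F x + F' x) (v + v') (C + C') := by
  unfold GapOnLE
  convert IntegralGapLE.add hF hF' using 2 with x
  by_cases hx : x ∈ s
  · simp only [indicator_of_mem hx]; ring
  · simp only [indicator_of_notMem hx, add_zero]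

lemma neg (hF : GapOnLE μ ν s F v C) : GapOnLE μ ν s (fun x => -F x) (-v) C := by
  unfold GapOnLE
  convert IntegralGapLE.neg hF using 2 with x
  by_cases hx : x ∈ s
  · simp only [indicator_of_mem hx]; ring
  · simp only [indicator_of_notMem hx, neg_zero]

lemma sub (hF : GapOnLE μ ν s F v C) (hF' : GapOnLE μ ν s F' v' C') :
    GapOnLE μ ν s (fun x => F x - F' x) (v - v') (C + C') := by
  simpa only [sub_eq_add_neg] using hF.add hF'.neg

lemma const (v : ℝ) : GapOnLE μ ν s (fun _ => v) v 0 := by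
  simp only [GapOnLE, sub_self, indicator_zero]
  exact ⟨integrable_zero _ _ _, integrable_zero _ _ _, by simp⟩

end GapOnLE

lemma IntegralGapLE.ite_of_gapOnLE [IsProbabilityMeasure μ] [IsProbabilityMeasure ν] {s : Set α}
    [DecidablePred (· ∈ s)] {F T : α → ℝ} {v τ a C D : ℝ} (hs : MeasurableSet s)
    (hF : GapOnLE μ ν s F v C) (hT : GapOnLE μ ν sᶜ T τ D) (ha : |μ.real s - ν.real s| ≤ a) :
    IntegralGapLE μ ν (fun x => if x ∈ s then F x else T x) (C + D + |v - τ| * a) := by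
  have jump : IntegralGapLE μ ν (fun x => (v - τ) * s.indicator 1 x) (|v - τ| * a) :=
    (IntegralGapLE.indicator_one hs ha).const_mul _
  convert ((IntegralGapLE.add hF hT).add jump).add (.const τ) using 1
  · ext x
    by_cases hx : x ∈ s <;> simp [hx]
  · ring

end IntegralGap

section Monotone

variable {α : Type*} [Preorder α] {S t : Set α} {κ : α → ℝ}

lemma monotoneOn_indicator_of_isUpperSet (hS : IsUpperSet S) (hκ : MonotoneOn κ t)
    (h₀ : ∀ x ∈ t, 0 ≤ κ x) : MonotoneOn (S.indicator κ) t := by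
  intro x hx y hy hxy
  by_cases hxS : x ∈ S
  · simpa [hxS, hS hxy hxS] using hκ hx hy hxy
  · simpa [hxS] using indicator_apply_nonneg fun _ => h₀ y hy

lemma antitoneOn_indicator_of_isLowerSet (hS : IsLowerSet S) (hκ : AntitoneOn κ t)
    (h₀ : ∀ x ∈ t, 0 ≤ κ x) : AntitoneOn (S.indicator κ) t := by
  intro x hx y hy hxy
  by_cases hyS : y ∈ S
  · simpa [hyS, hS hxy hyS] using hκ hx hy hxy
  · simpa [hyS] using indicator_apply_nonneg fun _ => h₀ x hx

end Monotone

section Kolmogorov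

variable {α : Type*} [LinearOrder α] [MeasurableSpace α]

/-- `μ` and `ν` are carried by `[l, u]` and give every lower set the same mass up to `b`: a bound on
their Kolmogorov distance, where open and closed half-lines are treated alike. -/
structure KolmogorovClose (μ ν : Measure α) (l u : α) (b : ℝ) : Prop where
  ae_mem_left : ∀ᵐ x ∂μ, x ∈ Icc l u
  ae_mem_right : ∀ᵐ x ∂ν, x ∈ Icc l u
  lowerSet_le : ∀ B : Set α, IsLowerSet B → |μ.real B - ν.real B| ≤ b

namespace KolmogorovClose

variable {μ ν : Measure α} {l u c : α} {b : ℝ} {F F' : α → ℝ} {v C : ℝ}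

lemma congr_gapOnLE {s : Set α} (h : KolmogorovClose μ ν l u b) (hF : GapOnLE μ ν s F v C)
    (heq : ∀ x ∈ Icc l u, x ∈ s → F x = F' x) : GapOnLE μ ν s F' v C := by
  have key : ∀ x ∈ Icc l u, (s.indicator fun x => F x - v) x = s.indicator (fun x => F' x - v) x :=
    fun x hx => by
      by_cases hxs : x ∈ s
      · simp only [indicator_of_mem hxs, heq x hx hxs]
      · simp only [indicator_of_notMem hxs]
  exact IntegralGapLE.congr hF (h.ae_mem_left.mono key) (h.ae_mem_right.mono key)

lemma nonneg (h : KolmogorovClose μ ν l u b) : 0 ≤ b :=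
  (abs_nonneg _).trans (h.lowerSet_le ∅ isLowerSet_empty)

lemma abs_real_Ico_sub_le (h : KolmogorovClose μ ν l u b) (y : α) :
    |μ.real (Ico l y) - ν.real (Ico l y)| ≤ b := by
  have congr {ρ : Measure α} (hρ : ∀ᵐ x ∂ρ, x ∈ Icc l u) : ρ.real (Ico l y) = ρ.real (Iio y) :=
    measureReal_congr <| hρ.mono fun _ hx => propext (and_iff_right hx.1)
  rw [congr h.ae_mem_left, congr h.ae_mem_right]
  exact h.lowerSet_le _ (isLowerSet_Iio y)

lemma left_le_right [NeZero μ] (h : KolmogorovClose μ ν l u b) : l ≤ u :=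
  let ⟨_, hx⟩ := h.ae_mem_left.exists
  hx.1.trans hx.2

variable [IsProbabilityMeasure μ] [IsProbabilityMeasure ν]
variable [TopologicalSpace α] [OrderClosedTopology α] [BorelSpace α]

/-- Layer cake: the superlevel sets of an antitone function are lower sets. -/
lemma gap_of_antitone (h : KolmogorovClose μ ν l u b) {f : α → ℝ} (hf : Antitone f) {V : ℝ}
    (h₀ : ∀ x, 0 ≤ f x) (hV : ∀ x, f x ≤ V) : IntegralGapLE μ ν f (V * b) := by
  have hV₀ : 0 ≤ V := (h₀ l).trans (hV l)
  have integrable (ρ : Measure α) [IsProbabilityMeasure ρ] : Integrable f ρ :=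
    .of_bound hf.measurable.aestronglyMeasurable V
      (.of_forall fun x => by simpa only [Real.norm_of_nonneg (h₀ x)] using hV x)
  have integrable_tail (ρ : Measure α) [IsProbabilityMeasure ρ] :
      IntegrableOn (fun t => ρ.real {x | t ≤ f x}) (Ioc 0 V) := by
    have anti : Antitone fun t => ρ.real {x | t ≤ f x} :=
      fun s t hst => measureReal_mono fun x (hx : t ≤ f x) => hst.trans hx
    exact ((anti.antitoneOn _).integrableOn_isCompact isCompact_Icc).mono_set Ioc_subset_Icc_self
  refine ⟨integrable μ, integrable ν, ?_⟩
  have cake (ρ : Measure α) [IsProbabilityMeasure ρ] :=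
    (integrable ρ).integral_eq_integral_Ioc_meas_le (.of_forall h₀) (.of_forall hV)
  rw [cake μ, cake ν, ← integral_sub (integrable_tail μ) (integrable_tail ν), ← Real.norm_eq_abs]
  refine (norm_setIntegral_le_of_norm_le_const (C := b) (by simp) fun t _ => ?_).trans_eq ?_
  · exact h.lowerSet_le _ fun x y hxy hx => le_trans (show t ≤ f x from hx) (hf hxy)
  · rw [measureReal_def, Real.volume_Ioc, sub_zero, ENNReal.toReal_ofReal hV₀, mul_comm]

lemma gap_of_antitoneOn (h : KolmogorovClose μ ν l u b) {f : α → ℝ} {p r : ℝ}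
    (hf : AntitoneOn f (Icc l u)) (hr : MapsTo f (Icc l u) (Icc p r)) :
    IntegralGapLE μ ν f ((r - p) * b) := by
  let clamp (x : α) : α := projIcc l u h.left_le_right x
  have anti : Antitone fun x => f (clamp x) - p := fun x y hxy =>
    sub_le_sub_right (hf (projIcc ..).2 (projIcc ..).2 (monotone_projIcc _ hxy)) p
  have gap := (h.gap_of_antitone anti (V := r - p)
    (fun x => sub_nonneg.2 (hr (projIcc ..).2).1)
    (fun x => sub_le_sub_right (hr (projIcc ..).2).2 p)).add (.const p)
  have key : ∀ x ∈ Icc l u, f (clamp x) - p + p = f x := fun x hx => by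
    rw [sub_add_cancel, show clamp x = x from congrArg Subtype.val (projIcc_of_mem _ hx)]
  rw [add_zero] at gap
  exact gap.congr (h.ae_mem_left.mono key) (h.ae_mem_right.mono key)

lemma gap_of_monotoneOn (h : KolmogorovClose μ ν l u b) {f : α → ℝ} {p r : ℝ}
    (hf : MonotoneOn f (Icc l u)) (hr : MapsTo f (Icc l u) (Icc p r)) :
    IntegralGapLE μ ν f ((r - p) * b) := by
  have gap := (h.gap_of_antitoneOn (f := fun x => -f x) hf.neg
    fun x hx => ⟨neg_le_neg (hr hx).2, neg_le_neg (hr hx).1⟩).neg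
  simpa only [neg_neg, neg_sub_neg] using gap

lemma gapOn_Iio_of_antitoneOn (h : KolmogorovClose μ ν l u b) (hF : AntitoneOn F (Ico l c))
    {V : ℝ} (hr : MapsTo F (Ico l c) (Icc v V)) (hvV : v ≤ V) :
    GapOnLE μ ν (Iio c) F v ((V - v) * b) := by
  have maps : MapsTo ((Iio c).indicator fun x => F x - v) (Icc l u) (Icc 0 (V - v)) :=
    fun x hx => by
      by_cases hxc : x < c
      · simpa [hxc] using hr ⟨hx.1, hxc⟩
      · simpa [hxc] using hvV
  have gap := h.gap_of_antitoneOn (fun x hx y hy hxy => ?_) maps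
  · rwa [sub_zero] at gap
  · by_cases hyc : y < c
    · have hxc := hxy.trans_lt hyc
      simpa [hyc, hxc] using hF ⟨hx.1, hxc⟩ ⟨hy.1, hyc⟩ hxy
    · simpa [hyc] using (maps hx).1

lemma gapOn_Iio_of_monotoneOn (h : KolmogorovClose μ ν l u b) (hF : MonotoneOn F (Ico l c))
    {r : ℝ} (hr : MapsTo F (Ico l c) (Icc r v)) (hrv : r ≤ v) :
    GapOnLE μ ν (Iio c) F v ((v - r) * b) := by
  have gap := (h.gapOn_Iio_of_antitoneOn (F := fun x => -F x) hF.neg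
    (fun x hx => ⟨neg_le_neg (hr hx).2, neg_le_neg (hr hx).1⟩) (neg_le_neg hrv)).neg
  simpa only [neg_neg, neg_sub_neg] using gap

lemma gapOn_compl_Iio_of_monotoneOn (h : KolmogorovClose μ ν l u b) (hF : MonotoneOn F (Icc c u))
    {V : ℝ} (hr : MapsTo F (Icc c u) (Icc v V)) (hvV : v ≤ V) :
    GapOnLE μ ν (Iio c)ᶜ F v ((V - v) * b) := by
  have maps : MapsTo ((Iio c)ᶜ.indicator fun x => F x - v) (Icc l u) (Icc 0 (V - v)) :=
    fun x hx => by
      by_cases hxc : c ≤ x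
      · simpa [hxc] using hr ⟨hxc, hx.2⟩
      · simpa [hxc] using hvV
  have gap := h.gap_of_monotoneOn (fun x hx y hy hxy => ?_) maps
  · rwa [sub_zero] at gap
  · by_cases hxc : c ≤ x
    · simpa [hxc, hxc.trans hxy] using hF ⟨hxc, hx.2⟩ ⟨hxc.trans hxy, hy.2⟩ hxy
    · simpa [hxc] using (maps hy).1

/-- `S.indicator J = J - Sᶜ.indicator J` is a difference of antitone functions. -/
lemma gapOn_Iio_indicator_of_antitoneOn (h : KolmogorovClose μ ν l u b) {S : Set α}
    (hS : IsUpperSet S) {J : α → ℝ} {j J₀ : ℝ} (hJ : AntitoneOn J (Ico l c))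
    (hr : MapsTo J (Ico l c) (Icc j J₀)) (hj : 0 ≤ j) (hjJ : j ≤ J₀) :
    GapOnLE μ ν (Iio c) (S.indicator J) j ((2 * J₀ - j) * b) := by
  have hJ₀ : ∀ x ∈ Ico l c, 0 ≤ J x := fun x hx => hj.trans (hr hx).1
  have whole := h.gapOn_Iio_of_antitoneOn hJ hr hjJ
  have missing : GapOnLE μ ν (Iio c) (Sᶜ.indicator J) 0 ((J₀ - 0) * b) :=
    h.gapOn_Iio_of_antitoneOn (antitoneOn_indicator_of_isLowerSet hS.compl hJ hJ₀)
      (fun x hx => ⟨indicator_apply_nonneg fun _ => hJ₀ x hx,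
        indicator_apply_le' (fun _ => (hr hx).2) fun _ => hj.trans hjJ⟩) (hj.trans hjJ)
  convert whole.sub missing using 1
  · ext x
    rw [indicator_compl, Pi.sub_apply, sub_sub_cancel]
  · rw [sub_zero]
  · ring

lemma gapOn_Iio_indicator_of_monotoneOn (h : KolmogorovClose μ ν l u b) {S : Set α}
    (hS : IsUpperSet S) {κ : α → ℝ} {k : ℝ} (hκ : MonotoneOn κ (Ico l c))
    (hr : MapsTo κ (Ico l c) (Icc 0 k)) (hk : 0 ≤ k) :
    GapOnLE μ ν (Iio c) (S.indicator κ) k (k * b) := by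
  have gap := h.gapOn_Iio_of_monotoneOn
    (monotoneOn_indicator_of_isUpperSet hS hκ fun x hx => (hr hx).1) (r := 0) (v := k)
    (fun x hx => ⟨indicator_apply_nonneg fun _ => (hr hx).1,
      indicator_apply_le' (fun _ => (hr hx).2) fun _ => hk⟩) hk
  rwa [sub_zero] at gap

end KolmogorovClose

end Kolmogorov

section GoldenRatio

/-- The point `g² = 2 - G` at which the density of `Qinf` and the map `uF` change form. -/
noncomputable def q : ℝ := gg ^ 2

lemma q_sq : q ^ 2 = 3 * q - 1 := by
  have h5 : √5 ^ 2 = 5 := Real.sq_sqrt (by norm_num)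
  unfold q gg
  nlinarith

lemma G_eq : G = 2 - q := by
  have h5 : √5 ^ 2 = 5 := Real.sq_sqrt (by norm_num)
  unfold q gg G
  nlinarith

lemma q_lt : q < 0.382 := by
  have h5 : √5 ^ 2 = 5 := Real.sq_sqrt (by norm_num)
  have h0 : 2.236 < √5 := Real.lt_sqrt_of_sq_lt (by norm_num)
  unfold q gg
  nlinarith

lemma lt_q : 0.3819 < q := by
  have h5 : √5 ^ 2 = 5 := Real.sq_sqrt (by norm_num)
  have h0 : √5 < 2.2361 := (Real.sqrt_lt' (by norm_num)).2 (by norm_num)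
  unfold q gg
  nlinarith

lemma neg_one_lt_of_neg_q_le {s : ℝ} (hs : -q ≤ s) : -1 < s := by
  linarith [q_lt]

lemma q_lt_G : q < G := by
  linarith [G_eq, q_lt]

lemma one_div_one_sub_q : 1 / (1 - q) = G := by
  rw [G_eq, div_eq_iff (by linarith [q_lt])]
  linarith [q_sq]

end GoldenRatio

section Branches

variable {s : ℝ}

/-- The inverse branch `s ↦ 1/(i+s)` of the continued fraction map with odd digit `i = 2m+1`. -/
noncomputable def oddBranch (m : ℕ) (s : ℝ) : ℝ := 1 / (2 * m + 1 + s)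

/-- The end points `1, 2, 4, 6, …` of the intervals around the odd digits `1, 3, 5, …`: the digit
`2m+1` owns the interval from `digitCut m` to `digitCut (m+1)`. -/
noncomputable def digitCut (m : ℕ) : ℝ := max 1 (2 * m)

/-- The total `branchMass` of the digits `2m+1, 2m+3, …`. -/
noncomputable def tailMass (m : ℕ) (s : ℝ) : ℝ := 1 / (digitCut m + s)

/-- The unnormalised probability of the digit `2m+1` in the state `s`. -/
noncomputable def branchMass (m : ℕ) (s : ℝ) : ℝ := tailMass m s - tailMass (m + 1) s

lemma digitCut_zero : digitCut 0 = 1 := by simp [digitCut]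

lemma digitCut_succ (m : ℕ) : digitCut (m + 1) = 2 * m + 2 := by
  rw [digitCut, max_eq_right] <;> push_cast <;> linarith [m.cast_nonneg (α := ℝ)]

lemma digitCut_add_two (m : ℕ) : digitCut (m + 2) = digitCut (m + 1) + 2 := by
  rw [digitCut_succ, digitCut_succ]
  push_cast
  ring

lemma digitCut_mono : Monotone digitCut := fun m n hmn =>
  max_le_max le_rfl (by exact_mod_cast Nat.mul_le_mul_left 2 hmn)

lemma one_le_digitCut (m : ℕ) : 1 ≤ digitCut m := le_max_left _ _

lemma two_le_digitCut_succ (m : ℕ) : 2 ≤ digitCut (m + 1) := by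
  linarith [digitCut_succ m, m.cast_nonneg (α := ℝ)]

lemma tailMass_antitone (hs : -1 < s) : Antitone (tailMass · s) := fun m n hmn =>
  one_div_le_one_div_of_le (by linarith [one_le_digitCut m])
    (by linarith [digitCut_mono hmn])

lemma tailMass_nonneg (hs : -1 < s) (m : ℕ) : 0 ≤ tailMass m s :=
  one_div_nonneg.2 (by linarith [one_le_digitCut m])

lemma branchMass_nonneg (hs : -1 < s) (m : ℕ) : 0 ≤ branchMass m s :=
  sub_nonneg.2 (tailMass_antitone hs m.le_succ)

lemma branchMass_eq (hs : -1 < s) (m : ℕ) :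
    branchMass m s =
      (digitCut (m + 1) - digitCut m) / ((digitCut m + s) * (digitCut (m + 1) + s)) := by
  have h1 : digitCut m + s ≠ 0 := by linarith [one_le_digitCut m]
  have h2 : digitCut (m + 1) + s ≠ 0 := by linarith [one_le_digitCut (m + 1)]
  unfold branchMass tailMass
  field_simp
  ring

lemma tendsto_tailMass (s : ℝ) : Tendsto (tailMass · s) atTop (nhds 0) := by
  simp only [tailMass, one_div]
  refine (tendsto_atTop_add_const_right _ s ?_).inv_tendsto_atTop
  refine tendsto_atTop_mono (fun m => ?_) tendsto_natCast_atTop_atTop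
  exact (by linarith [m.cast_nonneg (α := ℝ)] : (m : ℝ) ≤ 2 * m).trans (le_max_right _ _)

lemma hasSum_branchMass (hs : -1 < s) (k : ℕ) :
    HasSum (fun m => branchMass (m + k) s) (tailMass k s) := by
  rw [hasSum_iff_tendsto_nat_of_nonneg fun m => branchMass_nonneg hs _]
  have telescope (n : ℕ) : ∑ m ∈ Finset.range n, branchMass (m + k) s =
      tailMass k s - tailMass (n + k) s := by
    simpa [branchMass, add_right_comm] using
      Finset.sum_range_sub' (fun m => tailMass (m + k) s) n
  simp only [telescope]
  simpa using ((tendsto_tailMass s).comp (tendsto_add_atTop_nat k)).const_sub (tailMass k s)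

lemma oddBranch_le_G (hs : -q ≤ s) (m : ℕ) : oddBranch m s ≤ G := by
  rw [← one_div_one_sub_q]
  exact one_div_le_one_div_of_le (by linarith [q_lt]) (by linarith [m.cast_nonneg (α := ℝ)])

lemma oddBranch_pos (hs : -1 < s) (m : ℕ) : 0 < oddBranch m s :=
  one_div_pos.2 (by linarith [m.cast_nonneg (α := ℝ)])

lemma oddBranch_mem_Icc (hs : -q ≤ s) (m : ℕ) : oddBranch m s ∈ Icc 0 G :=
  ⟨(oddBranch_pos (neg_one_lt_of_neg_q_le hs) m).le, oddBranch_le_G hs m⟩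

end Branches

section Kernel

variable {s w : ℝ} {B : Set ℝ}

lemma digit_index (m : ℕ) :
    (2 * (m : ℝ) + 1) - 1 + (if 2 * (m : ℤ) + 1 = 1 then 1 else 0) = digitCut m := by
  rcases m with - | m
  · simp [digitCut]
  · rw [if_neg (by omega), digitCut_succ]
    push_cast
    ring

lemma digit_width (m : ℕ) :
    2 - (if 2 * (m : ℤ) + 1 = 1 then 1 else 0) = digitCut (m + 1) - digitCut m := by
  linarith [digit_index m, digitCut_succ m]

lemma PF_of_lt (hw : w < q) {e : ℤ} (he : -1 < e * w) (m : ℕ) :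
    PF w e (2 * m + 1) = (1 - w ^ 2) / 2 * branchMass m (e * w) := by
  have hcut : (2 * (m : ℝ) + 1) + 1 + e * w = digitCut (m + 1) + e * w := by
    rw [digitCut_succ]; ring
  rw [PF, if_pos (show w < gg ^ 2 from hw), digit_width]
  push_cast
  rw [digit_index, hcut, branchMass_eq he, div_mul_div_comm, mul_assoc 2]

lemma PF_one_of_ge (hw : q ≤ w) (m : ℕ) : PF w 1 (2 * m + 1) = (1 + w) * branchMass m w := by
  have hcut : (2 * (m : ℝ) + 1) + 1 + w = digitCut (m + 1) + w := by
    rw [digitCut_succ]; ring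
  rw [PF, if_neg (show ¬w < gg ^ 2 from hw.not_gt), digit_width, if_pos rfl]
  push_cast
  rw [digit_index, hcut, branchMass_eq (by linarith [lt_q]), mul_one, mul_div_assoc]

lemma PF_neg_one_of_ge (hw : q ≤ w) (m : ℕ) : PF w (-1) (2 * m + 1) = 0 := by
  rw [PF, if_neg (show ¬w < gg ^ 2 from hw.not_gt)]
  simp

lemma uF_one (w : ℝ) (m : ℕ) : uF w 1 (2 * m + 1) = oddBranch m w := by
  simp [uF, oddBranch]

lemma uF_neg_one_of_lt (hw : w < q) (m : ℕ) : uF w (-1) (2 * m + 1) = oddBranch m (-w) := by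
  rw [uF, if_neg (by norm_num), if_pos (show w < gg ^ 2 from hw), oddBranch]
  push_cast
  ring

/-- The atomic measure giving the point `1/(2m+1+s)` the unnormalised probability of `2m+1`. -/
noncomputable def branchMeasure (s : ℝ) : Measure ℝ :=
  .sum fun m => ENNReal.ofReal (branchMass m s) • .dirac (oddBranch m s)

lemma branchMeasure_apply (s : ℝ) (hB : MeasurableSet B) :
    branchMeasure s B =
      ∑' m, ENNReal.ofReal (branchMass m s) * B.indicator 1 (oddBranch m s) := by
  simp [branchMeasure, Measure.sum_apply _ hB, Measure.dirac_apply' _ hB]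

lemma branchMeasure_of_forall_notMem (hB : MeasurableSet B) (h : ∀ m, oddBranch m s ∉ B) :
    branchMeasure s B = 0 := by
  simp [branchMeasure_apply s hB, h]

lemma branchMeasure_of_mem_iff_le (hs : -1 < s) (hB : MeasurableSet B) {k : ℕ}
    (h : ∀ m, oddBranch m s ∈ B ↔ k ≤ m) : branchMeasure s B = ENNReal.ofReal (tailMass k s) := by
  have head : ∑ m ∈ Finset.range k,
      ENNReal.ofReal (branchMass m s) * B.indicator 1 (oddBranch m s) = 0 :=
    Finset.sum_eq_zero fun m hm => by simp [h, Finset.mem_range.1 hm]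
  rw [branchMeasure_apply s hB, ← ENNReal.summable.sum_add_tsum_nat_add' (k := k), head, zero_add,
    ← (hasSum_branchMass hs k).tsum_eq, ENNReal.ofReal_tsum_of_nonneg
      (fun m => branchMass_nonneg hs _) (hasSum_branchMass hs k).summable]
  exact tsum_congr fun m => by simp [h]

lemma branchMeasure_univ (hs : -1 < s) : branchMeasure s univ = ENNReal.ofReal (1 / (1 + s)) := by
  rw [branchMeasure_of_mem_iff_le hs .univ (k := 0) (by simp), tailMass, digitCut_zero]

lemma branchMeasure_compl_Icc (hs : -q ≤ s) : branchMeasure s (Icc 0 G)ᶜ = 0 :=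
  branchMeasure_of_forall_notMem measurableSet_Icc.compl fun m hm => hm (oddBranch_mem_Icc hs m)

lemma Qiter_one_of_lt (h₀ : 0 ≤ w) (hw : w < q) :
    Qiter 1 w = ENNReal.ofReal ((1 - w ^ 2) / 2) • (branchMeasure w + branchMeasure (-w)) := by
  have hweight : 0 ≤ (1 - w ^ 2) / 2 := by nlinarith [q_lt]
  have hplus (m : ℕ) : PF w 1 (2 * m + 1) = (1 - w ^ 2) / 2 * branchMass m w := by
    simpa using PF_of_lt hw (e := 1) (by push_cast; linarith) m
  have hminus (m : ℕ) : PF w (-1) (2 * m + 1) = (1 - w ^ 2) / 2 * branchMass m (-w) := by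
    simpa using PF_of_lt hw (e := -1) (by push_cast; linarith [q_lt]) m
  ext B hB
  simp [Qiter, Measure.sum_apply _ hB, branchMeasure_apply _ hB, Measure.dirac_apply' _ hB, hplus,
    hminus, uF_one, uF_neg_one_of_lt hw, ENNReal.ofReal_mul hweight, ← ENNReal.tsum_add,
    ← ENNReal.tsum_mul_left, mul_assoc]

lemma Qiter_one_of_ge (hw : q ≤ w) :
    Qiter 1 w = ENNReal.ofReal (1 + w) • branchMeasure w := by
  have hweight : 0 ≤ 1 + w := by linarith [lt_q]
  ext B hB
  simp [Qiter, Measure.sum_apply _ hB, branchMeasure_apply _ hB, Measure.dirac_apply' _ hB,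
    PF_one_of_ge hw, PF_neg_one_of_ge hw, uF_one, ENNReal.ofReal_mul hweight,
    ← ENNReal.tsum_mul_left, mul_assoc]

lemma Qiter_succ_apply (n : ℕ) (w : ℝ) (hB : MeasurableSet B) :
    Qiter (n + 1) w B = ∫⁻ x, Qiter 1 x B ∂Qiter n w := by
  induction n generalizing w with
  | zero => rw [Qiter, lintegral_dirac]
  | succ n ih =>
    rw [Qiter, Measure.sum_apply _ hB]
    simp only [Measure.add_apply, Measure.smul_apply, ih]
    conv_rhs => rw [Qiter]
    simp only [lintegral_sum_measure, lintegral_add_measure, lintegral_smul_measure]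

lemma Qiter_one_univ (hw : 0 ≤ w) : Qiter 1 w univ = 1 := by
  rcases lt_or_ge w q with h | h
  · have h1 : 0 < 1 + w := by linarith
    have h2 : 0 < 1 + -w := by linarith [q_lt]
    rw [Qiter_one_of_lt hw h, Measure.smul_apply, Measure.add_apply,
      branchMeasure_univ (neg_lt_iff_pos_add'.2 h1), branchMeasure_univ (by linarith), smul_eq_mul,
      ← ENNReal.ofReal_add (by positivity) (by positivity), ← ENNReal.ofReal_mul (by nlinarith),
      ENNReal.ofReal_eq_one]
    field_simp
    ring
  · have h1 : 0 < 1 + w := by linarith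
    rw [Qiter_one_of_ge h, Measure.smul_apply, branchMeasure_univ (by linarith), smul_eq_mul,
      ← ENNReal.ofReal_mul h1.le, mul_one_div_cancel h1.ne', ENNReal.ofReal_one]

lemma Qiter_one_compl_Icc (hw : 0 ≤ w) : Qiter 1 w (Icc 0 G)ᶜ = 0 := by
  have plus : branchMeasure w (Icc 0 G)ᶜ = 0 := branchMeasure_compl_Icc (by linarith [lt_q])
  rcases lt_or_ge w q with h | h
  · simp [Qiter_one_of_lt hw h, plus, branchMeasure_compl_Icc (neg_le_neg h.le)]
  · simp [Qiter_one_of_ge h, plus]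

lemma Qiter_ae_mem_Icc (hw : w ∈ Icc 0 G) (n : ℕ) : ∀ᵐ x ∂Qiter n w, x ∈ Icc 0 G := by
  induction n with
  | zero => exact (ae_dirac_iff measurableSet_Icc).2 hw
  | succ n ih =>
    rw [ae_iff, ← compl_def, Qiter_succ_apply n w measurableSet_Icc.compl,
      lintegral_congr_ae (ih.mono fun x hx => Qiter_one_compl_Icc hx.1), lintegral_zero]

lemma isProbabilityMeasure_Qiter (hw : w ∈ Icc 0 G) (n : ℕ) :
    IsProbabilityMeasure (Qiter n w) := by
  induction n with
  | zero => exact Measure.dirac.isProbabilityMeasure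
  | succ n ih =>
    refine ⟨?_⟩
    rw [Qiter_succ_apply n w .univ,
      lintegral_congr_ae ((Qiter_ae_mem_Icc hw n).mono fun x hx => Qiter_one_univ hx.1)]
    simp

end Kernel

section LebesgueIntegral

lemma setLIntegral_Ioo_neg_add {c d : ℝ} (hc : 0 < c) (hd : 0 < d) (f : ℝ → ℝ≥0∞) :
    (∫⁻ x in Ioo 0 c, f (-x)) + ∫⁻ x in Ioo 0 d, f x = ∫⁻ x in Ioo (-c) d, f x := by
  have reflect : ∫⁻ x in Ioo 0 c, f (-x) = ∫⁻ x in Ioo (-c) 0, f x := by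
    simpa using (Measure.measurePreserving_neg (volume : Measure ℝ)).setLIntegral_comp_preimage_emb
      (MeasurableEquiv.neg ℝ).measurableEmbedding f (Ioo (-c) 0)
  rw [reflect, ← Ioc_union_Ioo_eq_Ioo (neg_lt_zero.2 hc).le hd,
    lintegral_union measurableSet_Ioo (Set.disjoint_left.2 fun x hx hx' => hx.2.not_gt hx'.1),
    setLIntegral_congr Ioo_ae_eq_Ioc]

lemma setLIntegral_Ioc_ofReal_eq_sub {a b : ℝ} (hab : a ≤ b) {f F : ℝ → ℝ}
    (hcont : ContinuousOn F (Icc a b)) (hF : ∀ x ∈ Ioo a b, HasDerivAt F (f x) x)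
    (hf : ∀ x ∈ Ioo a b, 0 ≤ f x) :
    ∫⁻ x in Ioc a b, ENNReal.ofReal (f x) = ENNReal.ofReal (F b - F a) := by
  have integrable := intervalIntegral.integrableOn_deriv_of_nonneg hcont hF hf
  have nonneg : ∀ᵐ x ∂volume.restrict (Ioc a b), 0 ≤ f x := by
    rw [← restrict_Ioo_eq_restrict_Ioc]
    filter_upwards [ae_restrict_mem measurableSet_Ioo] with x hx using hf x hx
  rw [← ofReal_integral_eq_lintegral_ofReal integrable nonneg,
    ← intervalIntegral.integral_of_le hab,
    intervalIntegral.integral_eq_sub_of_hasDerivAt_of_le hab hcont hF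
      ((intervalIntegrable_iff_integrableOn_Ioc_of_le hab).2 integrable)]

end LebesgueIntegral

section Stationary

variable {B : Set ℝ} {s w : ℝ}

/-- The density of `Qinf` up to the constant `(3 log G)⁻¹`. -/
noncomputable def density (w : ℝ) : ℝ :=
  if w < q then 1 / (1 + w) + 1 / (1 - w) else 1 / (1 + w)

lemma density_nonneg (h : 0 ≤ w) : 0 ≤ density w := by
  unfold density
  split_ifs with hw
  · have : 0 < 1 - w := by linarith [q_lt]
    positivity
  · positivity

@[fun_prop]
lemma measurable_density : Measurable density :=
  .ite measurableSet_Iio (by fun_prop) (by fun_prop)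

/-- The invariant measure before normalisation. -/
noncomputable def densityMeasure : Measure ℝ :=
  (volume.restrict (Icc 0 G)).withDensity fun w => ENNReal.ofReal (density w)

lemma log_G_pos : 0 < log G := log_pos (by linarith [G_eq, q_lt])

lemma Qinf_eq_smul : Qinf = ENNReal.ofReal (3 * log G)⁻¹ • densityMeasure := by
  have hc : 0 ≤ (3 * log G)⁻¹ := by linarith [inv_pos.2 (mul_pos three_pos log_G_pos)]
  rw [densityMeasure, ← withDensity_smul _ (by fun_prop)]
  exact congrArg _ (funext fun w => ENNReal.ofReal_mul hc)

lemma densityMeasure_apply (hB : MeasurableSet B) :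
    densityMeasure B = ∫⁻ x in Ioc 0 G, B.indicator (fun x => ENNReal.ofReal (density x)) x := by
  rw [densityMeasure, withDensity_apply _ hB, ← lintegral_indicator hB,
    restrict_Ioc_eq_restrict_Icc]

@[fun_prop]
lemma measurable_oddBranch (m : ℕ) : Measurable (oddBranch m) := by
  unfold oddBranch
  fun_prop

lemma measurable_branchMass_mul_indicator (hB : MeasurableSet B) (m : ℕ) :
    Measurable fun s => ENNReal.ofReal (branchMass m s) * B.indicator 1 (oddBranch m s) := by
  have : Measurable (B.indicator (1 : ℝ → ℝ≥0∞)) := measurable_one.indicator hB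
  unfold branchMass tailMass
  fun_prop

lemma measurable_branchMeasure_apply (hB : MeasurableSet B) :
    Measurable fun s => branchMeasure s B := by
  simp only [branchMeasure_apply _ hB]
  exact .tsum (measurable_branchMass_mul_indicator hB)

lemma density_mul_Qiter_one (h₀ : 0 ≤ w) (B : Set ℝ) :
    ENNReal.ofReal (density w) * Qiter 1 w B =
      branchMeasure w B + (Iio q).indicator (fun w => branchMeasure (-w) B) w := by
  have h1 : 0 < 1 + w := by linarith
  rcases lt_or_ge w q with hw | hw
  · have h2 : 0 < 1 - w := by linarith [q_lt]
    have cancel : density w * ((1 - w ^ 2) / 2) = 1 := by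
      rw [density, if_pos hw]
      field_simp
      ring
    rw [Qiter_one_of_lt h₀ hw, Measure.smul_apply, smul_eq_mul, ← mul_assoc,
      ← ENNReal.ofReal_mul (density_nonneg h₀), cancel, ENNReal.ofReal_one, one_mul,
      Measure.add_apply, indicator_of_mem (show w ∈ Iio q from hw)]
  · have cancel : density w * (1 + w) = 1 := by
      rw [density, if_neg hw.not_gt, one_div_mul_cancel h1.ne']
    rw [Qiter_one_of_ge hw, Measure.smul_apply, smul_eq_mul, ← mul_assoc,
      ← ENNReal.ofReal_mul (density_nonneg h₀), cancel, ENNReal.ofReal_one, one_mul,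
      indicator_of_notMem (show w ∉ Iio q from hw.not_gt), add_zero]

lemma lintegral_Qiter_one_densityMeasure (hB : MeasurableSet B) :
    ∫⁻ w, Qiter 1 w B ∂densityMeasure = ∫⁻ s in Ioo (-q) G, branchMeasure s B := by
  rw [densityMeasure, lintegral_withDensity_eq_lintegral_mul_non_measurable _ (by fun_prop)
    (.of_forall fun _ => ENNReal.ofReal_lt_top), ← restrict_Ioo_eq_restrict_Icc]
  calc ∫⁻ w in Ioo 0 G, ENNReal.ofReal (density w) * Qiter 1 w B
    _ = ∫⁻ w in Ioo 0 G, (branchMeasure w B +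
          (Iio q).indicator (fun w => branchMeasure (-w) B) w) :=
        setLIntegral_congr_fun measurableSet_Ioo fun w hw => density_mul_Qiter_one hw.1.le B
    _ = (∫⁻ w in Ioo 0 G, branchMeasure w B) + ∫⁻ w in Ioo 0 q, branchMeasure (-w) B := by
        rw [lintegral_add_left (measurable_branchMeasure_apply hB),
          lintegral_indicator measurableSet_Iio, Measure.restrict_restrict measurableSet_Iio,
          inter_comm, Ioo_inter_Iio, min_eq_right q_lt_G.le]
    _ = ∫⁻ s in Ioo (-q) G, branchMeasure s B := by
        rw [add_comm, setLIntegral_Ioo_neg_add (f := (branchMeasure · B))] <;>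
          linarith [lt_q, q_lt_G]

lemma oddBranch_G (m : ℕ) : oddBranch m G = oddBranch (m + 1) (-q) := by
  rw [oddBranch, oddBranch, G_eq]
  push_cast
  ring

lemma oddBranch_strictAntiOn (m : ℕ) : StrictAntiOn (oddBranch m) (Ioi (-1)) :=
  fun x (hx : -1 < x) y _ hxy =>
    one_div_lt_one_div_of_lt (by linarith [m.cast_nonneg (α := ℝ)]) (by linarith)

lemma oddBranch_antitone (hs : -1 < s) : Antitone (oddBranch · s) := fun m n hmn =>
  one_div_le_one_div_of_le (by linarith [m.cast_nonneg (α := ℝ)])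
    (by linarith [(Nat.cast_le (α := ℝ)).2 hmn])

lemma hasDerivAt_oddBranch (hs : -1 < s) (m : ℕ) :
    HasDerivAt (oddBranch m) (-oddBranch m s ^ 2) s := by
  have h0 : 2 * m + 1 + s ≠ 0 := by linarith [m.cast_nonneg (α := ℝ)]
  have hinv := ((hasDerivAt_id' s).const_add (2 * (m : ℝ) + 1)).fun_inv h0
  have hfun : oddBranch m = fun x => (2 * (m : ℝ) + 1 + x)⁻¹ := funext fun x => one_div _
  rw [hfun]
  exact hinv.congr_deriv (by simp [neg_div])

lemma continuousOn_oddBranch (m : ℕ) : ContinuousOn (oddBranch m) (Icc (-q) G) := fun _ hs =>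
  (hasDerivAt_oddBranch (neg_one_lt_of_neg_q_le hs.1) m).continuousAt.continuousWithinAt

lemma image_oddBranch (m : ℕ) :
    oddBranch m '' Ioo (-q) G = Ioo (oddBranch (m + 1) (-q)) (oddBranch m (-q)) := by
  rw [← oddBranch_G]
  exact (continuousOn_oddBranch m).image_Ioo_of_strictAntiOn (by linarith [lt_q, q_lt_G])
    ((oddBranch_strictAntiOn m).mono fun s hs => neg_one_lt_of_neg_q_le hs.1)

lemma one_div_three_sub_q : 1 / (3 - q) = q := by
  rw [div_eq_iff (by linarith [q_lt])]
  linarith [q_sq]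

lemma q_le_oddBranch_zero (h : -1 < s) (hs : s ≤ G) : q ≤ oddBranch 0 s := by
  rw [← one_div_three_sub_q]
  refine one_div_le_one_div_of_le ?_ ?_ <;> push_cast <;> linarith [G_eq]

lemma oddBranch_succ_lt_q (hs : -q < s) (m : ℕ) : oddBranch (m + 1) s < q := by
  conv_rhs => rw [← one_div_three_sub_q]
  refine one_div_lt_one_div_of_lt ?_ ?_ <;> push_cast <;> linarith [q_lt, m.cast_nonneg (α := ℝ)]

lemma branchMass_eq_sq_mul_density (hs : s ∈ Ioo (-q) G) (m : ℕ) :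
    branchMass m s = oddBranch m s ^ 2 * density (oddBranch m s) := by
  have hs₁ : -1 < s := neg_one_lt_of_neg_q_le hs.1.le
  rcases m with - | m
  · have h1 : 0 < 1 + s := by linarith
    have h2 : 0 < 2 + s := by linarith
    have h3 : 1 + oddBranch 0 s = (2 + s) / (1 + s) := by
      simp only [oddBranch, CharP.cast_eq_zero, mul_zero, zero_add]
      field_simp
      ring
    rw [density, if_neg (q_le_oddBranch_zero hs₁ hs.2.le).not_gt, branchMass_eq hs₁, digitCut_zero,
      digitCut_succ, h3]
    simp only [oddBranch, CharP.cast_eq_zero, mul_zero, zero_add]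
    field_simp
    ring
  · obtain ⟨A, hA⟩ : ∃ A : ℝ, A = 2 * (m + 1 : ℕ) + 1 + s := ⟨_, rfl⟩
    have hA₁ : 0 < A - 1 := by rw [hA]; push_cast; linarith [m.cast_nonneg (α := ℝ)]
    have hA₀ : 0 < A := by linarith
    have hlow : digitCut (m + 1) + s = A - 1 := by rw [digitCut_succ, hA]; push_cast; ring
    have hhigh : digitCut (m + 1 + 1) + s = A + 1 := by rw [digitCut_succ, hA]; push_cast; ring
    rw [density, if_pos (oddBranch_succ_lt_q hs.1 m), branchMass, tailMass, tailMass, hlow, hhigh,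
      oddBranch, ← hA, one_add_div hA₀.ne', one_sub_div hA₀.ne']
    field_simp
    ring

lemma setLIntegral_branchMass (B : Set ℝ) (m : ℕ) :
    ∫⁻ s in Ioo (-q) G, ENNReal.ofReal (branchMass m s) * B.indicator 1 (oddBranch m s) =
      ∫⁻ x in Ioc (oddBranch (m + 1) (-q)) (oddBranch m (-q)),
        B.indicator (fun x => ENNReal.ofReal (density x)) x := by
  rw [← restrict_Ioo_eq_restrict_Ioc, ← image_oddBranch,
    lintegral_image_eq_lintegral_abs_deriv_mul measurableSet_Ioo
      (fun s hs => (hasDerivAt_oddBranch (neg_one_lt_of_neg_q_le hs.1.le) m).hasDerivWithinAt)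
      ((oddBranch_strictAntiOn m).injOn.mono fun s hs => neg_one_lt_of_neg_q_le hs.1.le)]
  refine setLIntegral_congr_fun measurableSet_Ioo fun s hs => ?_
  by_cases hB : oddBranch m s ∈ B
  · simp [hB, branchMass_eq_sq_mul_density hs, ENNReal.ofReal_mul (sq_nonneg (oddBranch m s))]
  · simp [hB]

lemma oddBranch_zero_neg_q : oddBranch 0 (-q) = G := by
  simpa [oddBranch, sub_eq_add_neg] using one_div_one_sub_q

lemma tendsto_oddBranch (s : ℝ) : Tendsto (oddBranch · s) atTop (nhds 0) := by
  simp only [oddBranch, one_div, add_assoc]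
  exact (tendsto_atTop_add_const_right _ _
    (tendsto_natCast_atTop_atTop.const_mul_atTop two_pos)).inv_tendsto_atTop

lemma iUnion_Ioc_oddBranch :
    ⋃ m, Ioc (oddBranch (m + 1) (-q)) (oddBranch m (-q)) = Ioc 0 G := by
  have hq : -1 < -q := neg_one_lt_of_neg_q_le le_rfl
  refine Subset.antisymm (iUnion_subset fun m => ?_) fun x hx => ?_
  · exact Ioc_subset_Ioc (oddBranch_pos hq _).le (oddBranch_le_G le_rfl m)
  · have hex : ∃ m, oddBranch m (-q) < x := ((tendsto_oddBranch _).eventually_lt_const hx.1).exists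
    obtain ⟨k, hk⟩ : ∃ k, Nat.find hex = k + 1 := Nat.exists_eq_succ_of_ne_zero fun h0 => by
      have := Nat.find_spec hex
      rw [h0, oddBranch_zero_neg_q] at this
      exact hx.2.not_gt this
    exact mem_iUnion.2 ⟨k, hk ▸ Nat.find_spec hex, not_lt.1 (Nat.find_min hex (by omega))⟩

lemma lintegral_Qiter_one_Qinf (hB : MeasurableSet B) : ∫⁻ w, Qiter 1 w B ∂Qinf = Qinf B := by
  have disjoint : Pairwise (Function.onFun Disjoint fun m : ℕ =>
      Ioc (oddBranch (m + 1) (-q)) (oddBranch m (-q))) :=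
    (oddBranch_antitone (neg_one_lt_of_neg_q_le le_rfl)).pairwise_disjoint_on_Ioc_succ
  rw [Qinf_eq_smul, lintegral_smul_measure, Measure.smul_apply,
    lintegral_Qiter_one_densityMeasure hB, densityMeasure_apply hB, ← iUnion_Ioc_oddBranch,
    lintegral_iUnion (fun m => measurableSet_Ioc) disjoint]
  simp only [branchMeasure_apply _ hB]
  rw [lintegral_tsum fun m => (measurable_branchMass_mul_indicator hB m).aemeasurable]
  simp only [setLIntegral_branchMass]

lemma log_one_sub_q : log (1 - q) = -log G := by
  rw [← one_div_one_sub_q, one_div, log_inv, neg_neg]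

lemma log_one_add_G : log (1 + G) = 2 * log G := by
  have : 1 + G = G ^ 2 := by
    rw [G_eq]
    linarith [q_sq]
  rw [this, log_pow, Nat.cast_two]

lemma log_one_add_q_mem_Icc : log (1 + q) ∈ Icc 0 (log G) := by
  have hq : 0 < q := by linarith [lt_q]
  exact ⟨log_nonneg (by linarith), log_le_log (by linarith) (by linarith [G_eq, q_lt])⟩

lemma densityMeasure_Iio_q :
    densityMeasure (Iio q) = ENNReal.ofReal (log (1 + q) + log G) := by
  have hderiv (x : ℝ) (h₀ : 0 ≤ x) (hx : x ≤ q) :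
      HasDerivAt (fun x => log (1 + x) - log (1 - x)) (1 / (1 + x) + 1 / (1 - x)) x := by
    have hplus := ((hasDerivAt_id' x).const_add 1).log (by linarith)
    have hminus := ((hasDerivAt_id' x).const_sub 1).log (by linarith [q_lt])
    exact (hplus.sub hminus).congr_deriv (by rw [neg_div, sub_neg_eq_add])
  have hset : Iio q ∩ Ioc 0 G = Ioo 0 q := by
    ext x
    simp only [mem_inter_iff, mem_Iio, mem_Ioc, mem_Ioo]
    exact ⟨fun h => ⟨h.2.1, h.1⟩, fun h => ⟨h.2, h.1, (h.2.trans q_lt_G).le⟩⟩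
  calc densityMeasure (Iio q)
    _ = ∫⁻ x in Ioo 0 q, ENNReal.ofReal (density x) := by
        rw [densityMeasure_apply measurableSet_Iio, lintegral_indicator measurableSet_Iio,
          Measure.restrict_restrict measurableSet_Iio, hset]
    _ = ∫⁻ x in Ioo 0 q, ENNReal.ofReal (1 / (1 + x) + 1 / (1 - x)) :=
        setLIntegral_congr_fun measurableSet_Ioo fun x hx => by simp only [density, if_pos hx.2]
    _ = ENNReal.ofReal (log (1 + q) + log G) := by
        rw [restrict_Ioo_eq_restrict_Ioc, setLIntegral_Ioc_ofReal_eq_sub (by linarith [lt_q])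
          (fun x hx => (hderiv x hx.1 hx.2).continuousAt.continuousWithinAt)
          (fun x hx => hderiv x hx.1.le hx.2.le)
          fun x hx => add_nonneg (one_div_nonneg.2 (by linarith [hx.1]))
            (one_div_nonneg.2 (by linarith [hx.2, q_lt])), log_one_sub_q]
        simp

lemma densityMeasure_compl_Iio_q :
    densityMeasure (Iio q)ᶜ = ENNReal.ofReal (2 * log G - log (1 + q)) := by
  have hderiv (x : ℝ) (hx : q ≤ x) : HasDerivAt (fun x => log (1 + x)) (1 / (1 + x)) x :=
    ((hasDerivAt_id' x).const_add 1).log (by linarith [lt_q])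
  have hset : Ici q ∩ Ioc 0 G = Icc q G := by
    ext x
    simp only [mem_inter_iff, mem_Ici, mem_Ioc, mem_Icc]
    exact ⟨fun h => ⟨h.1, h.2.2⟩, fun h => ⟨h.1, by linarith [lt_q, h.1], h.2⟩⟩
  calc densityMeasure (Iio q)ᶜ
    _ = ∫⁻ x in Icc q G, ENNReal.ofReal (density x) := by
        rw [compl_Iio, densityMeasure_apply measurableSet_Ici,
          lintegral_indicator measurableSet_Ici, Measure.restrict_restrict measurableSet_Ici, hset]
    _ = ∫⁻ x in Icc q G, ENNReal.ofReal (1 / (1 + x)) :=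
        setLIntegral_congr_fun measurableSet_Icc fun x hx => by
          simp only [density, if_neg hx.1.not_gt]
    _ = ENNReal.ofReal (2 * log G - log (1 + q)) := by
        rw [← restrict_Ioc_eq_restrict_Icc, setLIntegral_Ioc_ofReal_eq_sub q_lt_G.le
          (fun x hx => (hderiv x hx.1).continuousAt.continuousWithinAt)
          (fun x hx => hderiv x hx.1.le)
          fun x hx => one_div_nonneg.2 (by linarith [hx.1, lt_q]), log_one_add_G]

instance isProbabilityMeasure_Qinf : IsProbabilityMeasure Qinf where
  measure_univ := by
    have hpos : 0 < 3 * log G := mul_pos three_pos log_G_pos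
    obtain ⟨h₀, h₁⟩ := log_one_add_q_mem_Icc
    rw [Qinf_eq_smul, Measure.smul_apply, ← measure_add_measure_compl (s := Iio q)
      measurableSet_Iio, densityMeasure_Iio_q, densityMeasure_compl_Iio_q,
      ← ENNReal.ofReal_add (by linarith) (by linarith), smul_eq_mul,
      ← ENNReal.ofReal_mul (inv_nonneg.2 hpos.le), ENNReal.ofReal_eq_one, inv_mul_eq_one₀ hpos.ne']
    ring

lemma Qinf_real_Iio_q_mem_Icc : Qinf.real (Iio q) ∈ Icc (1 / 3) (2 / 3) := by
  have hpos := log_G_pos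
  obtain ⟨h₀, h₁⟩ := log_one_add_q_mem_Icc
  have value : Qinf.real (Iio q) = (log (1 + q) + log G) / (3 * log G) := by
    rw [measureReal_def, Qinf_eq_smul, Measure.smul_apply, densityMeasure_Iio_q, smul_eq_mul,
      ENNReal.toReal_mul, ENNReal.toReal_ofReal (by positivity),
      ENNReal.toReal_ofReal (by positivity), inv_mul_eq_div]
  rw [value]
  constructor
  · rw [le_div_iff₀ (by positivity)]
    linarith
  · rw [div_le_iff₀ (by positivity)]
    linarith

lemma Qinf_ae_mem_Icc : ∀ᵐ x ∂Qinf, x ∈ Icc 0 G :=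
  (withDensity_absolutelyContinuous _ _).ae_le (ae_restrict_mem measurableSet_Icc)

end Stationary

section Cut

variable {B S : Set ℝ} {k : ℕ} {s w : ℝ}

/-- The branches with index below `k` avoid `B`, those above `k` lie in `B`, and the `k`-th one
enters `B` on the upper set `S`. -/
structure IsCut (B : Set ℝ) (k : ℕ) (S : Set ℝ) : Prop where
  isUpperSet : IsUpperSet S
  mem_iff : ∀ s ∈ Ioc (-q) G, ∀ m, oddBranch m s ∈ B ↔ k < m ∨ m = k ∧ s ∈ S

/-- The `branchMeasure` of a set with cut `(k, S)`. -/
noncomputable def cutTail (k : ℕ) (S : Set ℝ) (s : ℝ) : ℝ :=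
  if s ∈ S then tailMass k s else tailMass (k + 1) s

/-- The one-step probability, from a state below `q`, of a set with cut `(k, S)`. -/
noncomputable def lowStepProb (k : ℕ) (S : Set ℝ) (w : ℝ) : ℝ :=
  (1 - w ^ 2) / 2 * (cutTail k S w + cutTail k S (-w))

/-- The one-step probability, from a state above `q`, of a set with cut `(k, S)`. -/
noncomputable def highStepProb (k : ℕ) (S : Set ℝ) (w : ℝ) : ℝ := (1 + w) * cutTail k S w

/-- The one-step probability of a set with cut `(k, S)`. -/
noncomputable def stepProb (k : ℕ) (S : Set ℝ) (w : ℝ) : ℝ :=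
  if w ∈ Iio q then lowStepProb k S w else highStepProb k S w

/-- The ranges of consecutive branches over `(-q, G]` abut, so `B` can only cut through one. -/
lemma forall_oddBranch_notMem_or_exists_isCut (hB : IsLowerSet B) :
    (∀ s ∈ Ioc (-q) G, ∀ m, oddBranch m s ∉ B) ∨ ∃ k S, IsCut B k S := by
  have hq : -1 < -q := neg_one_lt_of_neg_q_le le_rfl
  have anti (m : ℕ) {s t : ℝ} (hs : -q ≤ s) (hst : s ≤ t) : oddBranch m t ≤ oddBranch m s :=
    (oddBranch_strictAntiOn m).antitoneOn (hq.trans_le hs) (hq.trans_le (hs.trans hst)) hst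
  by_cases hex : ∃ k, oddBranch k G ∈ B
  · right
    let k := Nat.find hex
    refine ⟨k, {s | oddBranch k (max s (-q)) ∈ B}, fun s t hst hs => ?_, fun s hs m => ?_⟩
    · exact hB (anti k (le_max_right _ _) (max_le_max_right _ hst)) hs
    · rcases lt_trichotomy m k with hm | rfl | hm
      · have : oddBranch m s ∉ B := fun hmem => Nat.find_min hex hm (hB (anti m hs.1.le hs.2) hmem)
        simp [this, hm.not_gt, hm.ne]
      · simp [max_eq_left hs.1.le]
      · have : oddBranch m s ∈ B := by
          refine hB ((anti m le_rfl hs.1.le).trans ?_) (Nat.find_spec hex)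
          rw [oddBranch_G]
          exact oddBranch_antitone hq hm
        simp [this, hm]
  · exact .inl fun s hs m hmem => hex ⟨m, hB (anti m hs.1.le hs.2) hmem⟩

lemma isCut_Iio_q : IsCut (Iio q) 0 ∅ where
  isUpperSet := isUpperSet_empty
  mem_iff
    | _, hs, 0 => by simpa using q_le_oddBranch_zero (neg_one_lt_of_neg_q_le hs.1.le) hs.2
    | _, hs, m + 1 => by simpa using oddBranch_succ_lt_q hs.1 m

lemma IsCut.branchMeasure_eq (h : IsCut B k S) (hB : MeasurableSet B) (hs : s ∈ Ioc (-q) G) :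
    branchMeasure s B = ENNReal.ofReal (cutTail k S s) := by
  have hs₁ := neg_one_lt_of_neg_q_le hs.1.le
  unfold cutTail
  split_ifs with hsS
  · refine branchMeasure_of_mem_iff_le hs₁ hB fun m => (h.mem_iff s hs m).trans ?_
    simp only [hsS, and_true, le_iff_lt_or_eq, eq_comm]
  · refine branchMeasure_of_mem_iff_le hs₁ hB fun m => (h.mem_iff s hs m).trans ?_
    simp only [hsS, and_false, or_false, Nat.succ_le_iff]

lemma cutTail_nonneg (hs : -1 < s) : 0 ≤ cutTail k S s := by
  unfold cutTail
  split_ifs <;> exact tailMass_nonneg hs _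

lemma lowStepProb_nonneg (hw : w ∈ Ico 0 q) : 0 ≤ lowStepProb k S w :=
  mul_nonneg (by nlinarith [hw.1, hw.2, q_lt]) (add_nonneg (cutTail_nonneg (by linarith [hw.1]))
    (cutTail_nonneg (by linarith [hw.2, q_lt])))

lemma highStepProb_nonneg (hw : 0 ≤ w) : 0 ≤ highStepProb k S w :=
  mul_nonneg (by linarith) (cutTail_nonneg (by linarith))

lemma stepProb_nonneg (hw : 0 ≤ w) : 0 ≤ stepProb k S w := by
  unfold stepProb
  split_ifs with h
  · exact lowStepProb_nonneg ⟨hw, h⟩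
  · exact highStepProb_nonneg hw

lemma IsCut.Qiter_one_eq (h : IsCut B k S) (hB : MeasurableSet B) (hw : w ∈ Icc 0 G) :
    Qiter 1 w B = ENNReal.ofReal (stepProb k S w) := by
  have plus := h.branchMeasure_eq hB (s := w) ⟨by linarith [lt_q, hw.1], hw.2⟩
  rcases lt_or_ge w q with hwq | hwq
  · have minus := h.branchMeasure_eq hB (s := -w) ⟨neg_lt_neg hwq, by linarith [hw.1, hw.2]⟩
    rw [Qiter_one_of_lt hw.1 hwq, Measure.smul_apply, Measure.add_apply, plus, minus, smul_eq_mul,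
      ← ENNReal.ofReal_add (cutTail_nonneg (by linarith [hw.1]))
        (cutTail_nonneg (by linarith [q_lt])),
      ← ENNReal.ofReal_mul (by nlinarith [hw.1, q_lt]), stepProb,
      if_pos (show w ∈ Iio q from hwq), lowStepProb]
  · rw [Qiter_one_of_ge hwq, Measure.smul_apply, plus, smul_eq_mul,
      ← ENNReal.ofReal_mul (by linarith [hw.1]), stepProb,
      if_neg (show w ∉ Iio q from hwq.not_gt), highStepProb]

lemma Qiter_one_of_forall_oddBranch_notMem (hB : MeasurableSet B)
    (h : ∀ s ∈ Ioc (-q) G, ∀ m, oddBranch m s ∉ B) (hw : w ∈ Icc 0 G) : Qiter 1 w B = 0 := by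
  have plus := branchMeasure_of_forall_notMem hB (h w ⟨by linarith [lt_q, hw.1], hw.2⟩)
  rcases lt_or_ge w q with hwq | hwq
  · have minus := branchMeasure_of_forall_notMem hB
      (h (-w) ⟨neg_lt_neg hwq, by linarith [hw.1, hw.2]⟩)
    simp [Qiter_one_of_lt hw.1 hwq, plus, minus]
  · simp [Qiter_one_of_ge hwq, plus]

end Cut

section StepProbability

variable {S : Set ℝ} {k i j : ℕ} {s w : ℝ}

/-- `lowStepProb` of a set containing exactly the branches with index at least `i`. -/
noncomputable def symmTail (i : ℕ) (w : ℝ) : ℝ :=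
  (1 - w ^ 2) / 2 * (tailMass i w + tailMass i (-w))

lemma symmTail_eq (hw : w ∈ Ico 0 q) (i : ℕ) :
    symmTail i w = digitCut i * (1 - w ^ 2) / (digitCut i ^ 2 - w ^ 2) := by
  have h1 : 0 < digitCut i + w := by linarith [hw.1, one_le_digitCut i]
  have h2 : 0 < digitCut i - w := by linarith [hw.2, one_le_digitCut i, q_lt]
  have hprod : digitCut i ^ 2 - w ^ 2 = (digitCut i + w) * (digitCut i - w) := by ring
  rw [symmTail, tailMass, tailMass, hprod, ← sub_eq_add_neg]
  field_simp
  ring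

lemma symmTail_zero (hw : w ∈ Ico 0 q) : symmTail 0 w = 1 := by
  rw [symmTail_eq hw, digitCut_zero, one_mul, one_pow, div_self]
  nlinarith [hw.1, hw.2, q_lt]

lemma sq_lt_of_mem_Ico (hw : w ∈ Ico 0 q) : w ^ 2 < 0.146 := by
  nlinarith [hw.1, hw.2, q_lt]

lemma symmTail_antitoneOn (i : ℕ) : AntitoneOn (symmTail i) (Ico 0 q) := by
  intro x hx y hy hxy
  have hc := one_le_digitCut i
  have hx' := sq_lt_of_mem_Ico hx
  have hy' := sq_lt_of_mem_Ico hy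
  have hsq : x ^ 2 ≤ y ^ 2 := pow_le_pow_left₀ hx.1 hxy 2
  have hc2 : 1 ≤ digitCut i ^ 2 := one_le_pow₀ hc
  rw [symmTail_eq hx, symmTail_eq hy, div_le_div_iff₀ (by linarith) (by linarith)]
  nlinarith [mul_nonneg (zero_le_one.trans hc)
    (mul_nonneg (sub_nonneg.2 hc2) (sub_nonneg.2 hsq))]

/-- `0.854` is a lower bound for `1 - q²`. -/
lemma symmTail_mapsTo (i : ℕ) :
    MapsTo (symmTail i) (Ico 0 q) (Icc (0.854 / digitCut i) (1 / digitCut i)) := by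
  intro w hw
  have hc := one_le_digitCut i
  have hw' := sq_lt_of_mem_Ico hw
  have hc2 : 1 ≤ digitCut i ^ 2 := one_le_pow₀ hc
  rw [symmTail_eq hw]
  constructor
  · rw [div_le_div_iff₀ (by linarith) (by linarith)]
    nlinarith [sq_nonneg w]
  · rw [div_le_div_iff₀ (by linarith) (by linarith)]
    nlinarith [sq_nonneg w]

lemma lowStepProb_of_zero_notMem (hS : IsUpperSet S) (h₀ : 0 ∉ S) (hw : 0 ≤ w) :
    lowStepProb k S w =
      symmTail (k + 1) w + S.indicator (fun w => (1 - w ^ 2) / 2 * branchMass k w) w := by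
  have hneg : -w ∉ S := fun h => h₀ (hS (neg_nonpos.2 hw) h)
  by_cases hwS : w ∈ S <;> simp [lowStepProb, cutTail, symmTail, branchMass, hneg, hwS]
  ring

lemma lowStepProb_of_zero_mem (hS : IsUpperSet S) (h₀ : 0 ∈ S) (hw : 0 ≤ w) :
    lowStepProb k S w = symmTail k w -
      {w | -w ∉ S}.indicator (fun w => (1 - w ^ 2) / 2 * branchMass k (-w)) w := by
  have hwS : w ∈ S := hS hw h₀
  by_cases hneg : -w ∈ S <;> simp [lowStepProb, cutTail, symmTail, branchMass, hneg, hwS]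
  ring

lemma isUpperSet_setOf_neg_notMem (hS : IsUpperSet S) : IsUpperSet {w | -w ∉ S} :=
  fun _ _ hxy hx hy => hx (hS (neg_le_neg hxy) hy)

lemma branchMass_antitoneOn (m : ℕ) : AntitoneOn (branchMass m) (Ioi (-1)) := by
  intro x (hx : -1 < x) y (hy : -1 < y) hxy
  have h1 : 0 < digitCut m + x := by linarith [one_le_digitCut m]
  have h2 : 0 < digitCut (m + 1) + x := by linarith [one_le_digitCut (m + 1)]
  have hwidth : 0 ≤ digitCut (m + 1) - digitCut m := sub_nonneg.2 (digitCut_mono m.le_succ)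
  rw [branchMass_eq hx, branchMass_eq hy]
  gcongr
  linarith

lemma branchMass_zero (hs : -1 < s) : branchMass 0 s = 1 / ((1 + s) * (2 + s)) := by
  rw [branchMass_eq hs, digitCut_succ, digitCut_zero]
  norm_num

lemma branchMass_succ_le (hs : -1 < s) (m : ℕ) :
    branchMass (m + 1) s ≤ 2 / ((2 + s) * (4 + s)) := by
  have hcut := two_le_digitCut_succ m
  have h2 : 0 < 2 + s := by linarith
  have h4 : 0 < 4 + s := by linarith
  rw [branchMass_eq hs, digitCut_add_two, add_sub_cancel_left]
  gcongr
  all_goals linarith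

lemma antitoneOn_weighted_branchMass (m : ℕ) :
    AntitoneOn (fun w => (1 - w ^ 2) / 2 * branchMass m w) (Ico 0 q) := by
  intro x hx y _ hxy
  have hx₁ : -1 < x := by linarith [hx.1]
  have hy₁ : -1 < y := hx₁.trans_le hxy
  have hsq : x ^ 2 ≤ y ^ 2 := pow_le_pow_left₀ hx.1 hxy 2
  exact mul_le_mul (by linarith) (branchMass_antitoneOn m hx₁ hy₁ hxy) (branchMass_nonneg hy₁ m)
    (by linarith [sq_lt_of_mem_Ico hx])

lemma weighted_branchMass_zero_mapsTo :
    MapsTo (fun w => (1 - w ^ 2) / 2 * branchMass 0 w) (Ico 0 q) (Icc 0.129 0.25) := by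
  intro w hw
  have h1 : 0 < 1 + w := by linarith [hw.1]
  have h2 : 0 < 2 + w := by linarith [hw.1]
  have value : (1 - w ^ 2) / 2 * branchMass 0 w = (1 - w) / (2 * (2 + w)) := by
    rw [branchMass_zero (by linarith)]
    field_simp
    ring
  simp only [value]
  constructor
  · rw [le_div_iff₀ (by positivity)]
    linarith [hw.2, q_lt]
  · rw [div_le_iff₀ (by positivity)]
    linarith [hw.1]

lemma weighted_branchMass_succ_mapsTo (m : ℕ) :
    MapsTo (fun w => (1 - w ^ 2) / 2 * branchMass (m + 1) w) (Ico 0 q) (Icc 0 0.125) := by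
  intro w hw
  have hw₁ : -1 < w := by linarith [hw.1]
  have hsq := sq_lt_of_mem_Ico hw
  have hmass : branchMass (m + 1) w ≤ 0.25 := (branchMass_succ_le hw₁ m).trans <| by
    rw [div_le_iff₀ (by nlinarith [hw.1])]
    nlinarith [hw.1]
  refine ⟨mul_nonneg (by linarith) (branchMass_nonneg hw₁ _), ?_⟩
  simp only
  nlinarith [sq_nonneg w, branchMass_nonneg hw₁ (m + 1)]

lemma weighted_branchMass_zero_neg (hw : w ∈ Ico 0 q) :
    (1 - w ^ 2) / 2 * branchMass 0 (-w) = (1 + w) / (2 * (2 - w)) := by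
  have h1 : 0 < 1 - w := by linarith [hw.2, q_lt]
  have h2 : 0 < 2 - w := by linarith
  rw [branchMass_zero (by linarith), ← sub_eq_add_neg, ← sub_eq_add_neg]
  field_simp
  ring

lemma monotoneOn_branchMass_neg (m : ℕ) :
    MonotoneOn (fun w => branchMass m (-w) / 2) (Ico 0 q) := fun x hx y hy hxy =>
  div_le_div_of_nonneg_right (branchMass_antitoneOn m (show -1 < -y by linarith [hy.2, q_lt])
    (show -1 < -x by linarith [hx.2, q_lt]) (neg_le_neg hxy)) two_pos.le

lemma branchMass_succ_neg_mapsTo (m : ℕ) :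
    MapsTo (fun w => branchMass (m + 1) (-w) / 2) (Ico 0 q) (Icc 0 0.171) := by
  intro w hw
  have hw₁ : -1 < -w := by linarith [hw.2, q_lt]
  refine ⟨div_nonneg (branchMass_nonneg hw₁ _) two_pos.le, ?_⟩
  have := branchMass_succ_le hw₁ m
  have : 2 / ((2 + -w) * (4 + -w)) ≤ 0.342 := by
    rw [div_le_iff₀ (by nlinarith [hw.2, q_lt])]
    nlinarith [hw.2, q_lt]
  simp only
  linarith

lemma highStepProb_monotoneOn (hS : IsUpperSet S) (k : ℕ) :
    MonotoneOn (highStepProb k S) (Icc q G) := by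
  intro x hx y _ hxy
  have hx₁ : 0 < 1 + x := by linarith [hx.1, lt_q]
  have hmono (i : ℕ) : (1 + x) * tailMass i x ≤ (1 + y) * tailMass i y := by
    have hc := one_le_digitCut i
    rw [tailMass, tailMass, mul_one_div, mul_one_div,
      div_le_div_iff₀ (by linarith) (by linarith)]
    nlinarith
  unfold highStepProb cutTail
  split_ifs with hxS hyS hyS
  · exact hmono k
  · exact absurd (hS hxy hxS) hyS
  · exact (mul_le_mul_of_nonneg_left (tailMass_antitone (by linarith) k.le_succ) hx₁.le).trans
      (hmono k)
  · exact hmono (k + 1)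

/-- `2.6181` is an upper bound for `1 + G`. The lower bound is that of `symmTail_mapsTo` instead of
the sharp one: sharing the base level keeps the jump at `q` small. -/
lemma highStepProb_mapsTo (hj : ∀ w ∈ Icc q G, tailMass j w ≤ cutTail k S w)
    (hi : ∀ w ∈ Icc q G, cutTail k S w ≤ tailMass i w) :
    MapsTo (highStepProb k S) (Icc q G)
      (Icc (0.854 / digitCut j) (2.6181 / (digitCut i + 1.6181))) := by
  intro w hw
  have hi₁ := one_le_digitCut i
  have hj₁ := one_le_digitCut j
  have hwlow : 0.3819 < w := lt_q.trans_le hw.1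
  have hwup : w ≤ 1.6181 := hw.2.trans (by linarith [G_eq, lt_q])
  constructor
  · calc 0.854 / digitCut j
      _ ≤ (1 + w) * tailMass j w := by
          rw [tailMass, mul_one_div, div_le_div_iff₀ (by linarith) (by linarith)]
          nlinarith
      _ ≤ highStepProb k S w := mul_le_mul_of_nonneg_left (hj w hw) (by linarith)
  · calc highStepProb k S w
      _ ≤ (1 + w) * tailMass i w := mul_le_mul_of_nonneg_left (hi w hw) (by linarith)
      _ ≤ 2.6181 / (digitCut i + 1.6181) := by
          rw [tailMass, mul_one_div, div_le_div_iff₀ (by linarith) (by linarith)]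
          nlinarith

lemma tailMass_succ_le_cutTail (hs : -1 < s) : tailMass (k + 1) s ≤ cutTail k S s := by
  unfold cutTail
  split_ifs
  · exact tailMass_antitone hs k.le_succ
  · exact le_rfl

lemma cutTail_le_tailMass (hs : -1 < s) : cutTail k S s ≤ tailMass k s := by
  unfold cutTail
  split_ifs
  · exact le_rfl
  · exact tailMass_antitone hs k.le_succ

end StepProbability

section StepGap

variable {μ ν : Measure ℝ} [IsProbabilityMeasure μ] [IsProbabilityMeasure ν] {b : ℝ}
variable {S : Set ℝ} {k : ℕ}

namespace KolmogorovClose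

lemma gapOn_Iio_symmTail (h : KolmogorovClose μ ν 0 G b) (i : ℕ) :
    GapOnLE μ ν (Iio q) (symmTail i) (0.854 / digitCut i) (0.146 / digitCut i * b) := by
  have hc : 0 < digitCut i := zero_lt_one.trans_le (one_le_digitCut i)
  convert h.gapOn_Iio_of_antitoneOn (symmTail_antitoneOn i) (symmTail_mapsTo i)
    (by gcongr; norm_num) using 1
  ring

lemma gapOn_Iio_lowStepProb_of_q_notMem (h : KolmogorovClose μ ν 0 G b) (hS : IsUpperSet S)
    (hq : q ∉ S) : GapOnLE μ ν (Iio q) (lowStepProb k S) (0.854 / digitCut (k + 1))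
      (0.146 / digitCut (k + 1) * b) := by
  have h₀ : 0 ∉ S := fun h₀ => hq (hS (by linarith [lt_q]) h₀)
  refine h.congr_gapOnLE (h.gapOn_Iio_symmTail (k + 1)) fun x hx hxq => ?_
  rw [lowStepProb_of_zero_notMem hS h₀ hx.1,
    indicator_of_notMem fun hxS => hq (hS (le_of_lt hxq) hxS), add_zero]

lemma gapOn_Iio_lowStepProb_zero_of_zero_notMem (h : KolmogorovClose μ ν 0 G b)
    (hS : IsUpperSet S) (h₀ : 0 ∉ S) :
    GapOnLE μ ν (Iio q) (lowStepProb 0 S) 0.556 (0.444 * b) := by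
  have gap := (h.gapOn_Iio_symmTail 1).add (h.gapOn_Iio_indicator_of_antitoneOn hS
    (antitoneOn_weighted_branchMass 0) weighted_branchMass_zero_mapsTo (by norm_num) (by norm_num))
  convert h.congr_gapOnLE gap fun _ hx _ => (lowStepProb_of_zero_notMem hS h₀ hx.1).symm using 1
  · rw [digitCut_succ]; norm_num
  · rw [digitCut_succ]; norm_num; ring

lemma gapOn_Iio_lowStepProb_succ_of_zero_notMem (h : KolmogorovClose μ ν 0 G b)
    (hS : IsUpperSet S) (h₀ : 0 ∉ S) :
    GapOnLE μ ν (Iio q) (lowStepProb (k + 1) S) (0.854 / digitCut (k + 2))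
      ((0.146 / digitCut (k + 2) + 0.25) * b) := by
  have gap := (h.gapOn_Iio_symmTail (k + 2)).add (h.gapOn_Iio_indicator_of_antitoneOn hS
    (antitoneOn_weighted_branchMass (k + 1)) (weighted_branchMass_succ_mapsTo k) le_rfl
    (by norm_num))
  convert h.congr_gapOnLE gap fun _ hx _ => (lowStepProb_of_zero_notMem hS h₀ hx.1).symm using 1
    <;> ring

lemma gapOn_Iio_lowStepProb_zero_of_zero_mem (h : KolmogorovClose μ ν 0 G b)
    (hS : IsUpperSet S) (h₀ : 0 ∈ S) :
    GapOnLE μ ν (Iio q) (lowStepProb 0 S) 0.5728 (0.4272 * b) := by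
  have hU := isUpperSet_setOf_neg_notMem hS
  have hmono : MonotoneOn (fun w : ℝ => (1 + w) / (2 * (2 - w))) (Ico 0 q) := by
    intro x _ y hy hxy
    have hden : 0 < 2 * (2 - y) := by linarith [hy.2, q_lt]
    simp only
    rw [div_le_div_iff₀ (by linarith) hden]
    nlinarith
  have hmaps : MapsTo (fun w : ℝ => (1 + w) / (2 * (2 - w))) (Ico 0 q) (Icc 0 0.4272) := by
    intro x hx
    have hden : 0 < 2 * (2 - x) := by linarith [hx.2, q_lt]
    refine ⟨div_nonneg (by linarith [hx.1]) hden.le, (div_le_iff₀ hden).2 ?_⟩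
    linarith [hx.2, q_lt]
  have gap := (GapOnLE.const 1).sub
    (h.gapOn_Iio_indicator_of_monotoneOn hU hmono hmaps (by norm_num))
  rw [zero_add, show (1 : ℝ) - 0.4272 = 0.5728 by norm_num] at gap
  refine h.congr_gapOnLE gap fun x hx hxq => ?_
  have hx' : x ∈ Ico 0 q := ⟨hx.1, hxq⟩
  rw [lowStepProb_of_zero_mem hS h₀ hx.1, symmTail_zero hx']
  simp only [indicator_apply, weighted_branchMass_zero_neg hx']

/-- The lost mass `(1 - w²) κ` need not be monotone, but it is the difference of the monotone
functions `κ` and `w² κ`. -/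
lemma gapOn_Iio_lowStepProb_succ_of_zero_mem (h : KolmogorovClose μ ν 0 G b)
    (hS : IsUpperSet S) (h₀ : 0 ∈ S) :
    GapOnLE μ ν (Iio q) (lowStepProb (k + 1) S) (0.854 / digitCut (k + 1) - 0.146)
      ((0.146 / digitCut (k + 1) + 0.196) * b) := by
  let κ (w : ℝ) : ℝ := branchMass (k + 1) (-w) / 2
  have hU := isUpperSet_setOf_neg_notMem hS
  have hκ : MonotoneOn κ (Ico 0 q) := monotoneOn_branchMass_neg (k + 1)
  have hκr : MapsTo κ (Ico 0 q) (Icc 0 0.171) := branchMass_succ_neg_mapsTo k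
  have hsqκ : MonotoneOn (fun w => w ^ 2 * κ w) (Ico 0 q) := fun x hx y hy hxy =>
    mul_le_mul (pow_le_pow_left₀ hx.1 hxy 2) (hκ hx hy hxy) (hκr hx).1 (sq_nonneg y)
  have hsqκr : MapsTo (fun w => w ^ 2 * κ w) (Ico 0 q) (Icc 0 0.025) := fun x hx =>
    ⟨mul_nonneg (sq_nonneg x) (hκr hx).1, (mul_le_mul (sq_lt_of_mem_Ico hx).le (hκr hx).2
      (hκr hx).1 (by norm_num)).trans (by norm_num)⟩
  have gap := ((h.gapOn_Iio_symmTail (k + 1)).sub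
    (h.gapOn_Iio_indicator_of_monotoneOn hU hκ hκr (by norm_num))).add
    (h.gapOn_Iio_indicator_of_monotoneOn hU hsqκ hsqκr (by norm_num))
  convert h.congr_gapOnLE (F' := lowStepProb (k + 1) S) gap fun x hx _ => ?_ using 1
  · ring
  · ring
  · rw [lowStepProb_of_zero_mem hS h₀ hx.1]
    by_cases hxS : -x ∈ S
    · simp [hxS]
    · simp only [indicator_apply, mem_ofPred_eq, if_pos hxS, κ]
      ring

lemma gapOn_compl_Iio_highStepProb (h : KolmogorovClose μ ν 0 G b) (hS : IsUpperSet S) {i j : ℕ}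
    (hj : ∀ w ∈ Icc q G, tailMass j w ≤ cutTail k S w)
    (hi : ∀ w ∈ Icc q G, cutTail k S w ≤ tailMass i w) :
    GapOnLE μ ν (Iio q)ᶜ (highStepProb k S) (0.854 / digitCut j)
      ((2.6181 / (digitCut i + 1.6181) - 0.854 / digitCut j) * b) := by
  have maps := highStepProb_mapsTo hj hi
  have hq : q ∈ Icc q G := left_mem_Icc.2 q_lt_G.le
  exact h.gapOn_compl_Iio_of_monotoneOn (highStepProb_monotoneOn hS k) maps
    ((maps hq).1.trans (maps hq).2)

variable {v τ C D θ : ℝ}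

lemma gap_stepProb_of_gapOnLE (h : KolmogorovClose μ ν 0 G b)
    (ha : |μ.real (Iio q) - ν.real (Iio q)| ≤ 2 / 3 * b)
    (hlow : GapOnLE μ ν (Iio q) (lowStepProb k S) v (C * b))
    (hhigh : GapOnLE μ ν (Iio q)ᶜ (highStepProb k S) τ (D * b))
    (hθ : C + D + |v - τ| * (2 / 3) ≤ θ) : IntegralGapLE μ ν (stepProb k S) (θ * b) := by
  refine (IntegralGapLE.ite_of_gapOnLE measurableSet_Iio hlow hhigh ha).mono ?_
  calc C * b + D * b + |v - τ| * (2 / 3 * b) = (C + D + |v - τ| * (2 / 3)) * b := by ring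
    _ ≤ θ * b := mul_le_mul_of_nonneg_right hθ h.nonneg

lemma gap_stepProb_zero (h : KolmogorovClose μ ν 0 G b) (hS : IsUpperSet S)
    (ha : |μ.real (Iio q) - ν.real (Iio q)| ≤ 2 / 3 * b) :
    IntegralGapLE μ ν (stepProb 0 S) (0.8234 * b) := by
  have hhigh {j : ℕ} (hj : ∀ w ∈ Icc q G, tailMass j w ≤ cutTail 0 S w) :=
    h.gapOn_compl_Iio_highStepProb hS hj fun w hw =>
      cutTail_le_tailMass (by linarith [hw.1, lt_q])
  by_cases hq : q ∈ S
  · have htail : ∀ w ∈ Icc q G, tailMass 0 w ≤ cutTail 0 S w := fun w hw => by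
      rw [cutTail, if_pos (hS hw.1 hq)]
    by_cases h₀ : 0 ∈ S
    · refine h.gap_stepProb_of_gapOnLE ha (h.gapOn_Iio_lowStepProb_zero_of_zero_mem hS h₀)
        (hhigh htail) ?_
      rw [digitCut_zero]
      norm_num [abs_of_neg]
    · refine h.gap_stepProb_of_gapOnLE ha (h.gapOn_Iio_lowStepProb_zero_of_zero_notMem hS h₀)
        (hhigh htail) ?_
      rw [digitCut_zero]
      norm_num [abs_of_neg]
  · refine h.gap_stepProb_of_gapOnLE ha (h.gapOn_Iio_lowStepProb_of_q_notMem hS hq)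
      (hhigh fun w hw => tailMass_succ_le_cutTail (by linarith [hw.1, lt_q])) ?_
    rw [digitCut_zero, digitCut_succ]
    norm_num

lemma gap_stepProb_succ (h : KolmogorovClose μ ν 0 G b) (hS : IsUpperSet S)
    (ha : |μ.real (Iio q) - ν.real (Iio q)| ≤ 2 / 3 * b) :
    IntegralGapLE μ ν (stepProb (k + 1) S) (0.8234 * b) := by
  have hc := two_le_digitCut_succ k
  have hhigh {j : ℕ} (hj : ∀ w ∈ Icc q G, tailMass j w ≤ cutTail (k + 1) S w) :=
    h.gapOn_compl_Iio_highStepProb hS hj fun w hw =>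
      cutTail_le_tailMass (by linarith [hw.1, lt_q])
  by_cases h₀ : 0 ∈ S
  · refine h.gap_stepProb_of_gapOnLE ha (h.gapOn_Iio_lowStepProb_succ_of_zero_mem hS h₀)
      (hhigh (j := k + 1) fun w hw => ?_) ?_
    · rw [cutTail, if_pos (hS (by linarith [hw.1, lt_q]) h₀)]
    · have hnum : 2.6181 / (digitCut (k + 1) + 1.6181) ≤ 0.48 + 0.708 / digitCut (k + 1) := by
        rw [add_div' _ _ _ (by linarith), div_le_div_iff₀ (by linarith) (by linarith)]
        nlinarith
      rw [sub_right_comm, sub_self, zero_sub, abs_neg, abs_of_pos (by norm_num)]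
      linarith [add_div 0.146 0.708 (digitCut (k + 1))]
  · refine h.gap_stepProb_of_gapOnLE ha (h.gapOn_Iio_lowStepProb_succ_of_zero_notMem hS h₀)
      (hhigh fun w hw => tailMass_succ_le_cutTail (by linarith [hw.1, lt_q])) ?_
    have hnum : 2.6181 / (digitCut (k + 1) + 1.6181) ≤ 0.5734 + 0.708 / digitCut (k + 2) := by
      rw [digitCut_add_two, add_div' _ _ _ (by linarith),
        div_le_div_iff₀ (by linarith) (by linarith)]
      nlinarith
    rw [sub_self, abs_zero]
    linarith [add_div 0.146 0.708 (digitCut (k + 2))]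

lemma gap_stepProb (h : KolmogorovClose μ ν 0 G b) (hS : IsUpperSet S)
    (ha : |μ.real (Iio q) - ν.real (Iio q)| ≤ 2 / 3 * b) (k : ℕ) :
    IntegralGapLE μ ν (stepProb k S) (0.8234 * b) :=
  match k with
  | 0 => h.gap_stepProb_zero hS ha
  | _ + 1 => h.gap_stepProb_succ hS ha

lemma gap_stepProb_empty (h : KolmogorovClose μ ν 0 G b)
    (ha : |μ.real (Iio q) - ν.real (Iio q)| ≤ 2 / 3 * b) :
    IntegralGapLE μ ν (stepProb 0 ∅) (0.5 * b) := by
  have htail (w : ℝ) : cutTail 0 ∅ w = tailMass 1 w := if_neg (notMem_empty w)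
  refine h.gap_stepProb_of_gapOnLE ha
    (h.gapOn_Iio_lowStepProb_of_q_notMem isUpperSet_empty (notMem_empty q))
    (h.gapOn_compl_Iio_highStepProb isUpperSet_empty (fun w _ => (htail w).ge)
      fun w _ => (htail w).le) ?_
  rw [digitCut_succ]
  norm_num

end KolmogorovClose

end StepGap

section Convergence

variable {w C b : ℝ} {n k : ℕ} {B S : Set ℝ}

lemma abs_Qiter_succ_real_sub_le {f : ℝ → ℝ} (hw : w ∈ Icc 0 G) (hB : MeasurableSet B)
    (hf : IntegralGapLE (Qiter n w) Qinf f C) (h₀ : ∀ x ∈ Icc 0 G, 0 ≤ f x)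
    (hval : ∀ x ∈ Icc 0 G, Qiter 1 x B = ENNReal.ofReal (f x)) :
    |(Qiter (n + 1) w).real B - Qinf.real B| ≤ C := by
  have supp := Qiter_ae_mem_Icc hw n
  rw [measureReal_def, measureReal_def, Qiter_succ_apply n w hB, ← lintegral_Qiter_one_Qinf hB]
  exact hf.abs_toReal_lintegral_sub_le (supp.mono h₀) (Qinf_ae_mem_Icc.mono h₀) (supp.mono hval)
    (Qinf_ae_mem_Icc.mono hval)

lemma IsCut.abs_Qiter_succ_real_sub_le (hcut : IsCut B k S) (hB : MeasurableSet B)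
    (hw : w ∈ Icc 0 G) (hgap : IntegralGapLE (Qiter n w) Qinf (stepProb k S) C) :
    |(Qiter (n + 1) w).real B - Qinf.real B| ≤ C :=
  OCF.abs_Qiter_succ_real_sub_le hw hB hgap (fun _ hx => stepProb_nonneg hx.1)
    fun _ hx => hcut.Qiter_one_eq hB hx

lemma kolmogorovClose_Qiter_succ (hw : w ∈ Icc 0 G)
    (h : KolmogorovClose (Qiter n w) Qinf 0 G b)
    (ha : |(Qiter n w).real (Iio q) - Qinf.real (Iio q)| ≤ 2 / 3 * b) :
    KolmogorovClose (Qiter (n + 1) w) Qinf 0 G (0.8234 * b) := by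
  refine ⟨Qiter_ae_mem_Icc hw _, Qinf_ae_mem_Icc, fun B hB => ?_⟩
  have := isProbabilityMeasure_Qiter hw n
  have hBm : MeasurableSet B := hB.ordConnected.measurableSet
  obtain hmiss | ⟨k, S, hcut⟩ := forall_oddBranch_notMem_or_exists_isCut hB
  · refine abs_Qiter_succ_real_sub_le hw hBm ((IntegralGapLE.const 0).mono ?_)
      (fun _ _ => le_rfl) fun x hx => ?_
    · linarith [h.nonneg]
    · rw [Qiter_one_of_forall_oddBranch_notMem hBm hmiss hx, ENNReal.ofReal_zero]
  · exact hcut.abs_Qiter_succ_real_sub_le hBm hw (h.gap_stepProb hcut.isUpperSet ha k)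

lemma abs_Qiter_succ_real_Iio_q_sub_le (hw : w ∈ Icc 0 G)
    (h : KolmogorovClose (Qiter n w) Qinf 0 G b)
    (ha : |(Qiter n w).real (Iio q) - Qinf.real (Iio q)| ≤ 2 / 3 * b) :
    |(Qiter (n + 1) w).real (Iio q) - Qinf.real (Iio q)| ≤ 0.5 * b := by
  have := isProbabilityMeasure_Qiter hw n
  exact isCut_Iio_q.abs_Qiter_succ_real_sub_le measurableSet_Iio hw (h.gap_stepProb_empty ha)

lemma kolmogorovClose_Qiter_zero (hw : w ∈ Icc 0 G) : KolmogorovClose (Qiter 0 w) Qinf 0 G 1 where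
  ae_mem_left := Qiter_ae_mem_Icc hw 0
  ae_mem_right := Qinf_ae_mem_Icc
  lowerSet_le B _ := by
    have := isProbabilityMeasure_Qiter hw 0
    exact abs_sub_le_of_nonneg_of_le measureReal_nonneg measureReal_le_one measureReal_nonneg
      measureReal_le_one

lemma abs_Qiter_zero_real_Iio_q_sub_le (w : ℝ) :
    |(Qiter 0 w).real (Iio q) - Qinf.real (Iio q)| ≤ 2 / 3 := by
  obtain ⟨hlow, hup⟩ := Qinf_real_Iio_q_mem_Icc
  rw [Qiter, measureReal_def, Measure.dirac_apply' w measurableSet_Iio, abs_le]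
  by_cases hwq : w ∈ Iio q
  · rw [indicator_of_mem hwq, Pi.one_apply, ENNReal.toReal_one]
    constructor <;> linarith
  · rw [indicator_of_notMem hwq, ENNReal.toReal_zero]
    constructor <;> linarith

lemma kolmogorovClose_Qiter_and_Iio_q (hw : w ∈ Icc 0 G) (n : ℕ) :
    KolmogorovClose (Qiter n w) Qinf 0 G (0.8234 ^ n) ∧
      |(Qiter n w).real (Iio q) - Qinf.real (Iio q)| ≤ 2 / 3 * 0.8234 ^ n := by
  induction n with
  | zero => simpa using ⟨kolmogorovClose_Qiter_zero hw, abs_Qiter_zero_real_Iio_q_sub_le w⟩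
  | succ n ih =>
    obtain ⟨hclose, hq⟩ := ih
    rw [pow_succ']
    refine ⟨kolmogorovClose_Qiter_succ hw hclose hq, ?_⟩
    exact (abs_Qiter_succ_real_Iio_q_sub_le hw hclose hq).trans (by linarith [hclose.nonneg])

end Convergence

end OCF

/-- With `θ = 0.8234`, for every `n ≥ 1`, every `w ∈ W` and every `y ∈ W`,
`|Qⁿ(w,[0,y)) - Q∞([0,y))| ≤ θⁿ`. -/
theorem ocf_Qn_convergence (n : ℕ) (hn : 1 ≤ n) (w : ℝ) (hw : w ∈ Set.Icc (0 : ℝ) G)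
    (y : ℝ) (hy : y ∈ Set.Icc (0 : ℝ) G) :
    |(Qiter n w (Set.Ico 0 y)).toReal - (Qinf (Set.Ico 0 y)).toReal| ≤ 0.8234 ^ n := by
  obtain ⟨hclose, -⟩ := kolmogorovClose_Qiter_and_Iio_q hw n
  exact hclose.abs_real_Ico_sub_le y
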